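/- arXiv:1408.4430 — 3 statements merged into one kernel-verified Lean document; each statement's English description precedes it below -/
import Mathlib

section
/- Let k ≥ 1/3. Then there exists a function ψ̂ : ℝ² → ℝ which is convex on [0,∞)×(0,∞), nondecreasing in its first argument on [0,∞)×(0,∞) (i.e. ψ̂(i1,i2) ≤ ψ̂(i1',i2) whenever 0 ≤ i1 ≤ i1' and i2 > 0), and satisfies ψ̂(λ1+λ2, λ1λ2) = exp((k/2)·(log(λ1/λ2))²) for all λ1, λ2 > 0. -/
/-!
In terms of `s = log (λ₁ / λ₂)` the energy is `exp (k / 2 * s ^ 2)`, while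
`cosh s = i₁ ^ 2 / (2 * i₂) - 1` is a convex function of the invariants that increases with `i₁`.
So it suffices that `exp (k / 2 * s ^ 2)` is convex and nondecreasing as a function of `cosh s`.
Its derivative with respect to `cosh s` is `k * (s * exp (k / 2 * s ^ 2) / sinh s)`, which is
monotone for `s > 0` because `s * cosh s ≤ (1 + s ^ 2 / 3) * sinh s`; this is where `1 / 3 ≤ k`
enters. Not every point of the quadrant comes from principal stretches (these satisfy
`4 * i₂ ≤ i₁ ^ 2`), so `cosh s` is replaced by its maximum with `1`, which keeps it convex.
-/

open Set Real

section Convexity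

variable {𝕜 E β γ : Type*}

lemma convexOn_comp_of_mapsTo [Semiring 𝕜] [PartialOrder 𝕜] [AddCommMonoid E] [SMul 𝕜 E]
    [AddCommMonoid β] [PartialOrder β] [SMul 𝕜 β] [AddCommMonoid γ] [PartialOrder γ] [SMul 𝕜 γ]
    {s : Set E} {t : Set β} {f : E → β} {g : β → γ} (hg : ConvexOn 𝕜 t g)
    (hg_mono : MonotoneOn g t) (hf : ConvexOn 𝕜 s f) (hft : MapsTo f s t) :
    ConvexOn 𝕜 s (g ∘ f) := by
  refine ⟨hf.1, fun x hx y hy a b ha hb hab ↦ ?_⟩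
  calc g (f (a • x + b • y))
      ≤ g (a • f x + b • f y) :=
        hg_mono (hft (hf.1 hx hy ha hb hab)) (hg.1 (hft hx) (hft hy) ha hb hab)
          (hf.2 hx hy ha hb hab)
    _ ≤ a • g (f x) + b • g (f y) := hg.2 (hft hx) (hft hy) ha hb hab

lemma convexOn_sq_div [Field 𝕜] [LinearOrder 𝕜] [IsStrictOrderedRing 𝕜] :
    ConvexOn 𝕜 (univ ×ˢ Ioi 0) fun p : 𝕜 × 𝕜 ↦ p.1 ^ 2 / p.2 := by
  refine convexOn_iff_forall_pos.2 ⟨convex_univ.prod (convex_Ioi 0), ?_⟩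
  rintro ⟨x₁, y₁⟩ ⟨-, hy₁ : 0 < y₁⟩ ⟨x₂, y₂⟩ ⟨-, hy₂ : 0 < y₂⟩ a b ha hb -
  have sedrakyan := Finset.univ.sq_sum_div_le_sum_sq_div ![a * x₁, b * x₂]
    (g := ![a * y₁, b * y₂]) (by simp [Fin.forall_fin_two, *])
  simp only [Fin.sum_univ_two, Matrix.cons_val_zero, Matrix.cons_val_one] at sedrakyan
  calc (a * x₁ + b * x₂) ^ 2 / (a * y₁ + b * y₂)
      ≤ (a * x₁) ^ 2 / (a * y₁) + (b * x₂) ^ 2 / (b * y₂) := sedrakyan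
    _ = a * (x₁ ^ 2 / y₁) + b * (x₂ ^ 2 / y₂) := by field_simp

end Convexity

section Hyperbolic

lemma mul_apply_nonneg_of_monotone {R : Type*} [Ring R] [LinearOrder R] [IsStrictOrderedRing R]
    {f : R → R} (hf : Monotone f) (hf₀ : f 0 = 0) (x : R) : 0 ≤ x * f x := by
  rcases le_total 0 x with hx | hx
  · exact mul_nonneg hx (hf₀ ▸ hf hx)
  · exact mul_nonneg_of_nonpos_of_nonpos hx (hf₀ ▸ hf hx)

lemma monotone_mul_cosh_sub_sinh : Monotone fun x : ℝ ↦ x * cosh x - sinh x := by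
  have hderiv (x : ℝ) : HasDerivAt (fun x ↦ x * cosh x - sinh x) (x * sinh x) x :=
    (((hasDerivAt_id' x).mul (hasDerivAt_cosh x)).sub (hasDerivAt_sinh x)).congr_deriv (by ring)
  exact monotone_of_hasDerivAt_nonneg hderiv
    (mul_apply_nonneg_of_monotone sinh_strictMono.monotone sinh_zero)

lemma monotone_one_add_sq_div_three_mul_sinh_sub :
    Monotone fun x : ℝ ↦ (1 + x ^ 2 / 3) * sinh x - x * cosh x := by
  have hderiv (x : ℝ) : HasDerivAt (fun x ↦ (1 + x ^ 2 / 3) * sinh x - x * cosh x)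
      (x * (x * cosh x - sinh x) / 3) x :=
    (((((hasDerivAt_pow 2 x).div_const 3).const_add 1).mul (hasDerivAt_sinh x)).sub
      ((hasDerivAt_id' x).mul (hasDerivAt_cosh x))).congr_deriv (by push_cast; ring)
  refine monotone_of_hasDerivAt_nonneg hderiv fun x ↦ div_nonneg ?_ zero_le_three
  exact mul_apply_nonneg_of_monotone monotone_mul_cosh_sub_sinh (by simp) x

lemma mul_cosh_le_one_add_sq_div_three_mul_sinh {x : ℝ} (hx : 0 ≤ x) :
    x * cosh x ≤ (1 + x ^ 2 / 3) * sinh x := by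
  simpa using monotone_one_add_sq_div_three_mul_sinh_sub hx

lemma monotoneOn_comp_arcosh {α : Type*} [Preorder α] {f : ℝ → α} (hf : MonotoneOn f (Ici 0)) :
    MonotoneOn (f ∘ arcosh) (Ici 1) :=
  hf.comp (strictMonoOn_arcosh.monotoneOn.mono (Ici_subset_Ioi.2 one_pos)) fun _ ↦ arcosh_nonneg

lemma convexOn_comp_arcosh {f f' : ℝ → ℝ} (hf : ContinuousOn f (Ici 0))
    (hf' : ∀ s ∈ Ioi 0, HasDerivAt f (f' s) s)
    (hmono : MonotoneOn (fun s ↦ f' s / sinh s) (Ioi 0)) :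
    ConvexOn ℝ (Ici 1) (f ∘ arcosh) := by
  have hderiv : ∀ c ∈ Ioi (1 : ℝ),
      HasDerivAt (f ∘ arcosh) (f' (arcosh c) / sinh (arcosh c)) c := fun c hc ↦ by
    rw [sinh_arcosh (le_of_lt hc)]
    exact (hf' _ (arcosh_pos hc)).comp c (hasDerivAt_arcosh hc)
  have harcosh : MonotoneOn arcosh (Ioi 1) :=
    strictMonoOn_arcosh.monotoneOn.mono (Ioi_subset_Ioi zero_le_one)
  refine MonotoneOn.convexOn_of_deriv (convex_Ici 1)
    (hf.comp continuousOn_arcosh fun _ ↦ arcosh_nonneg) ?_ ?_ <;> rw [interior_Ici]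
  · exact fun c hc ↦ (hderiv c hc).differentiableAt.differentiableWithinAt
  · exact (hmono.comp harcosh fun _ ↦ arcosh_pos).congr fun c hc ↦ (hderiv c hc).deriv.symm

end Hyperbolic

section Energy

/-- The planar isochoric exponentiated Hencky energy `e^{k‖dev₂ log U‖²}` as a function of the
logarithm `s = log (λ₁ / λ₂)` of the ratio of the principal stretches; here
`‖dev₂ log U‖² = s ^ 2 / 2`. -/
noncomputable def expHencky (k s : ℝ) : ℝ := exp (k / 2 * s ^ 2)

variable {k : ℝ}

lemma hasDerivAt_expHencky (s : ℝ) : HasDerivAt (expHencky k) (k * s * expHencky k s) s :=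
  ((hasDerivAt_pow 2 s).const_mul (k / 2)).exp.congr_deriv <| by
    rw [expHencky]
    push_cast
    ring

lemma monotoneOn_expHencky (hk : 0 ≤ k) : MonotoneOn (expHencky k) (Ici 0) := by
  intro s (hs : 0 ≤ s) t _ hst
  unfold expHencky
  gcongr

lemma monotoneOn_mul_expHencky_div_sinh (hk : 1 / 3 ≤ k) :
    MonotoneOn (fun s ↦ s * expHencky k s / sinh s) (Ioi 0) := by
  have hderiv : ∀ s ∈ Ioi (0 : ℝ), HasDerivAt (fun s ↦ s * expHencky k s / sinh s)
      (expHencky k s * ((1 + k * s ^ 2) * sinh s - s * cosh s) / sinh s ^ 2) s := fun s hs ↦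
    (((hasDerivAt_id' s).fun_mul (hasDerivAt_expHencky s)).fun_div (hasDerivAt_sinh s)
      (sinh_pos_iff.2 hs).ne').congr_deriv (by ring)
  refine monotoneOn_of_hasDerivWithinAt_nonneg (convex_Ioi 0)
    (fun s hs ↦ (hderiv s hs).continuousAt.continuousWithinAt)
    (fun s hs ↦ (hderiv s (interior_subset hs)).hasDerivWithinAt) fun s hs ↦ ?_
  have hs₀ : 0 < s := interior_subset hs
  have hcosh : s * cosh s ≤ (1 + k * s ^ 2) * sinh s :=
    calc s * cosh s
        ≤ (1 + 1 / 3 * s ^ 2) * sinh s := by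
          simpa only [one_div_mul_eq_div] using mul_cosh_le_one_add_sq_div_three_mul_sinh hs₀.le
      _ ≤ (1 + k * s ^ 2) * sinh s :=
          mul_le_mul_of_nonneg_right (by gcongr) (sinh_nonneg_iff.2 hs₀.le)
  exact div_nonneg (mul_nonneg (exp_pos _).le (sub_nonneg.2 hcosh)) (sq_nonneg _)

lemma convexOn_expHencky_comp_arcosh (hk : 1 / 3 ≤ k) :
    ConvexOn ℝ (Ici 1) (expHencky k ∘ arcosh) := by
  have hk₀ : 0 ≤ k := by linarith
  refine convexOn_comp_arcosh
    (fun s _ ↦ (hasDerivAt_expHencky s).continuousAt.continuousWithinAt)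
    (fun s _ ↦ hasDerivAt_expHencky s) fun s hs t ht hst ↦ ?_
  simpa only [mul_assoc, mul_div_assoc] using
    mul_le_mul_of_nonneg_left (monotoneOn_mul_expHencky_div_sinh hk hs ht hst) hk₀

end Energy

section Distortion

/-- The distortion `(λ₁ ^ 2 + λ₂ ^ 2) / (2 * λ₁ * λ₂)` of a planar stretch as a function of its
invariants `i₁ = λ₁ + λ₂` and `i₂ = λ₁ * λ₂`, extended by the value `1` to the pairs with
`i₁ ^ 2 < 4 * i₂`, which are not the invariants of any stretch. -/
noncomputable def distortion (p : ℝ × ℝ) : ℝ := max 1 (p.1 ^ 2 / p.2 / 2 - 1)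

lemma one_le_distortion (p : ℝ × ℝ) : 1 ≤ distortion p := le_max_left _ _

lemma convexOn_distortion : ConvexOn ℝ (univ ×ˢ Ioi 0) distortion := by
  have hconvex : ConvexOn ℝ (univ ×ˢ Ioi 0) fun p : ℝ × ℝ ↦ p.1 ^ 2 / p.2 / 2 - 1 :=
    ((convexOn_sq_div.smul (c := (2⁻¹ : ℝ)) (by positivity)).add_const (-1)).congr fun p _ ↦ by
      simp only [Pi.add_apply, smul_eq_mul]
      ring
  exact (convexOn_const 1 hconvex.1).sup hconvex

lemma distortion_mono_left {i₁ i₁' i₂ : ℝ} (h₀ : 0 ≤ i₁) (h : i₁ ≤ i₁') (hi₂ : 0 ≤ i₂) :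
    distortion (i₁, i₂) ≤ distortion (i₁', i₂) := by
  unfold distortion
  gcongr

lemma distortion_add_mul {l₁ l₂ : ℝ} (h₁ : 0 < l₁) (h₂ : 0 < l₂) :
    distortion (l₁ + l₂, l₁ * l₂) = cosh (log (l₁ / l₂)) := by
  have hcosh : (l₁ + l₂) ^ 2 / (l₁ * l₂) / 2 - 1 = cosh (log (l₁ / l₂)) := by
    rw [cosh_log (div_pos h₁ h₂)]
    field_simp
    ring
  rw [distortion, hcosh, max_eq_right (one_le_cosh _)]

lemma arcosh_distortion_add_mul {l₁ l₂ : ℝ} (h₁ : 0 < l₁) (h₂ : 0 < l₂) :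
    arcosh (distortion (l₁ + l₂, l₁ * l₂)) = |log (l₁ / l₂)| := by
  rw [distortion_add_mul h₁ h₂, ← cosh_abs, arcosh_cosh (abs_nonneg _)]

end Distortion

theorem steigmann_representation_exists (k : ℝ) (hk : k ≥ 1 / 3) :
    ∃ ψ : ℝ × ℝ → ℝ,
      ConvexOn ℝ (Set.Ici (0:ℝ) ×ˢ Set.Ioi (0:ℝ)) ψ ∧
      (∀ i1 i1' i2 : ℝ, 0 ≤ i1 → i1 ≤ i1' → 0 < i2 → ψ (i1, i2) ≤ ψ (i1', i2)) ∧
      (∀ l1 l2 : ℝ, 0 < l1 → 0 < l2 →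
        ψ (l1 + l2, l1 * l2) = Real.exp ((k / 2) * (Real.log (l1 / l2)) ^ 2)) := by
  have hmono : MonotoneOn (expHencky k ∘ arcosh) (Ici 1) :=
    monotoneOn_comp_arcosh (monotoneOn_expHencky (by linarith))
  refine ⟨(expHencky k ∘ arcosh) ∘ distortion, ?_, ?_, ?_⟩
  · have hconvex : ConvexOn ℝ (univ ×ˢ Ioi 0) ((expHencky k ∘ arcosh) ∘ distortion) :=
      convexOn_comp_of_mapsTo (convexOn_expHencky_comp_arcosh hk) hmono convexOn_distortion
        fun p _ ↦ one_le_distortion p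
    exact hconvex.subset (prod_mono_left (subset_univ _)) ((convex_Ici 0).prod (convex_Ioi 0))
  · intro i1 i1' i2 h₀ h hi2
    exact hmono (one_le_distortion _) (one_le_distortion _) (distortion_mono_left h₀ h hi2.le)
  · intro l1 l2 h1 h2
    simp only [Function.comp_apply, arcosh_distortion_add_mul h1 h2, expHencky, sq_abs]
end

section
/- For all α > 0 and β > 0 there exists a constant K > 0 such that exp(β·(log t)²) ≥ K·|t − 1|^{αβ} for all t > 0. -/
/-!
With `x = log t` we have `|t - 1| = |exp x - 1| ≤ exp |x|`, and completing the square gives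
`α |x| ≤ α ^ 2 / 4 + x ^ 2`. The case `β = 1` therefore holds with `K = exp (-(α ^ 2 / 4))`, and the
general case is its `β`-th power.
-/

theorem abs_exp_sub_one_le_exp_abs (x : ℝ) : |Real.exp x - 1| ≤ Real.exp |x| := by
  have exp_le : Real.exp x ≤ Real.exp |x| := Real.exp_le_exp.mpr (le_abs_self x)
  have one_le : 1 ≤ Real.exp |x| := Real.one_le_exp (abs_nonneg x)
  exact abs_sub_le_of_nonneg_of_le (Real.exp_nonneg x) exp_le zero_le_one one_le

theorem abs_exp_sub_one_rpow_le_exp_sq_div_four_add_sq {α : ℝ} (hα : 0 ≤ α) (x : ℝ) :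
    |Real.exp x - 1| ^ α ≤ Real.exp (α ^ 2 / 4 + x ^ 2) := by
  have am_gm : α * |x| ≤ α ^ 2 / 4 + x ^ 2 := by
    linarith [two_mul_le_add_sq (α / 2) |x|, sq_abs x]
  calc
    |Real.exp x - 1| ^ α ≤ Real.exp |x| ^ α :=
      Real.rpow_le_rpow (abs_nonneg _) (abs_exp_sub_one_le_exp_abs x) hα
    _ = Real.exp (α * |x|) := by rw [← Real.exp_mul, mul_comm]
    _ ≤ Real.exp (α ^ 2 / 4 + x ^ 2) := Real.exp_le_exp.mpr am_gm

theorem exp_mul_abs_sub_one_rpow_le_exp_log_sq {α t : ℝ} (hα : 0 ≤ α) (ht : 0 < t) :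
    Real.exp (-(α ^ 2 / 4)) * |t - 1| ^ α ≤ Real.exp (Real.log t ^ 2) := by
  have rpow_le : |t - 1| ^ α ≤ Real.exp (α ^ 2 / 4 + Real.log t ^ 2) := by
    simpa only [Real.exp_log ht] using
      abs_exp_sub_one_rpow_le_exp_sq_div_four_add_sq hα (Real.log t)
  rwa [Real.exp_neg, inv_mul_le_iff₀ (Real.exp_pos _), ← Real.exp_add]

theorem unconditional_coercivity_1D_scaled (α β : ℝ) (hα : 0 < α) (hβ : 0 < β) :
    ∃ K : ℝ, 0 < K ∧ ∀ t : ℝ, 0 < t →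
      Real.exp (β * (Real.log t) ^ 2) ≥ K * |t - 1| ^ (α * β) := by
  refine ⟨Real.exp (-(α ^ 2 / 4)) ^ β, Real.rpow_pos_of_pos (Real.exp_pos _) β, fun t ht => ?_⟩
  calc
    Real.exp (-(α ^ 2 / 4)) ^ β * |t - 1| ^ (α * β) =
        (Real.exp (-(α ^ 2 / 4)) * |t - 1| ^ α) ^ β := by
      rw [Real.rpow_mul (abs_nonneg _), Real.mul_rpow (by positivity) (by positivity)]
    _ ≤ Real.exp (Real.log t ^ 2) ^ β :=
      Real.rpow_le_rpow (by positivity) (exp_mul_abs_sub_one_rpow_le_exp_log_sq hα.le ht) hβ.le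
    _ = Real.exp (β * Real.log t ^ 2) := by rw [← Real.exp_mul, mul_comm]
end

section
/- Let μ, κ, k, k̂ > 0 and α1, α2 > 0. Then there exist constants C1, C2, C3 > 0 such that for all λ1, λ2 > 0: (μ/k)·exp((k/2)·(log(λ1/λ2))²) + (κ/(2k̂))·exp(k̂·(log(λ1λ2))²) ≥ C1·((√(λ1/λ2) − 1)² + (√(λ2/λ1) − 1)²)^{α1·k/2} + C2·|λ1λ2 − 1|^{α2·k̂} − C3. -/
/-! Write `t` for `log (l1 / l2)` or `log (l1 * l2)`. The distortion and the dilation are each at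
most `exp |t|`, so their `p`-th powers are at most `exp (p * |t|)`. Completing the square gives
`p * |t| ≤ a * t ^ 2 + p ^ 2 / (4 * a)`, so `exp (a * t ^ 2)` dominates these powers up to the
factor `exp (p ^ 2 / (4 * a))`. The two parts are thus bounded separately, and the subtracted
constant only adds slack. -/

section ExpSq

variable {a : ℝ}

theorem mul_sub_sq_div_le_mul_sq (ha : 0 < a) (p s : ℝ) :
    p * s - p ^ 2 / (4 * a) ≤ a * s ^ 2 := by
  have complete_square :
      a * s ^ 2 - (p * s - p ^ 2 / (4 * a)) = (2 * a * s - p) ^ 2 / (4 * a) := by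
    field_simp
    ring
  rw [← sub_nonneg, complete_square]
  positivity

theorem exp_neg_mul_rpow_le_exp_mul_sq (ha : 0 < a) {p t B : ℝ} (hp : 0 ≤ p) (hB : 0 ≤ B)
    (hBt : B ≤ Real.exp |t|) :
    Real.exp (-(p ^ 2 / (4 * a))) * B ^ p ≤ Real.exp (a * t ^ 2) :=
  calc Real.exp (-(p ^ 2 / (4 * a))) * B ^ p
      ≤ Real.exp (-(p ^ 2 / (4 * a))) * Real.exp |t| ^ p := by gcongr
    _ = Real.exp (p * |t| - p ^ 2 / (4 * a)) := by
        rw [← Real.exp_mul, ← Real.exp_add, mul_comm |t| p, neg_add_eq_sub]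
    _ ≤ Real.exp (a * t ^ 2) := by
        rw [Real.exp_le_exp, ← sq_abs t]
        exact mul_sub_sq_div_le_mul_sq ha p |t|

theorem exists_pos_mul_rpow_le_mul_exp_mul_sq {A p : ℝ} (hA : 0 < A) (ha : 0 < a) (hp : 0 ≤ p) :
    ∃ C : ℝ, 0 < C ∧ ∀ t B : ℝ, 0 ≤ B → B ≤ Real.exp |t| →
      C * B ^ p ≤ A * Real.exp (a * t ^ 2) := by
  refine ⟨A * Real.exp (-(p ^ 2 / (4 * a))), by positivity, fun t B hB hBt ↦ ?_⟩
  rw [mul_assoc]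
  exact mul_le_mul_of_nonneg_left (exp_neg_mul_rpow_le_exp_mul_sq ha hp hB hBt) hA.le

end ExpSq

section ExpAbsLog

variable {x : ℝ}

theorem exp_abs_log_of_one_le (hx : 1 ≤ x) : Real.exp |Real.log x| = x := by
  rw [abs_of_nonneg (Real.log_nonneg hx), Real.exp_log (zero_lt_one.trans_le hx)]

theorem le_exp_abs_log (x : ℝ) : x ≤ Real.exp |Real.log x| :=
  (Real.le_exp_log x).trans (Real.exp_le_exp.2 (le_abs_self _))

theorem abs_sub_one_le_exp_abs_log (hx : 0 ≤ x) : |x - 1| ≤ Real.exp |Real.log x| := by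
  have one_le : 1 ≤ Real.exp |Real.log x| := Real.one_le_exp (abs_nonneg _)
  exact abs_sub_le_iff.2 ⟨by linarith [le_exp_abs_log x], by linarith⟩

theorem sq_sub_one_add_sq_inv_sub_one_le_sq {y : ℝ} (hy : 1 ≤ y) :
    (y - 1) ^ 2 + (y⁻¹ - 1) ^ 2 ≤ y ^ 2 := by
  have inv_nonneg : 0 ≤ y⁻¹ := by positivity
  have inv_le_one : y⁻¹ ≤ 1 := inv_le_one_of_one_le₀ hy
  nlinarith

theorem sq_sqrt_sub_one_add_sq_sqrt_inv_sub_one_le_exp_abs_log (hx : 0 < x) :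
    (√x - 1) ^ 2 + (√x⁻¹ - 1) ^ 2 ≤ Real.exp |Real.log x| := by
  wlog one_le : 1 ≤ x generalizing x
  · have swapped := this (inv_pos.2 hx) ((one_le_inv₀ hx).2 (le_of_not_ge one_le))
    rwa [inv_inv, add_comm, Real.log_inv, abs_neg] at swapped
  rw [exp_abs_log_of_one_le one_le, Real.sqrt_inv]
  calc (√x - 1) ^ 2 + ((√x)⁻¹ - 1) ^ 2
      ≤ √x ^ 2 := sq_sub_one_add_sq_inv_sub_one_le_sq (Real.one_le_sqrt.2 one_le)
    _ = x := Real.sq_sqrt hx.le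

end ExpAbsLog

theorem coercivity_dev_tr (μ κ k khat α1 α2 : ℝ)
    (hμ : 0 < μ) (hκ : 0 < κ) (hk : 0 < k) (hkhat : 0 < khat)
    (hα1 : 0 < α1) (hα2 : 0 < α2) :
    ∃ C1 C2 C3 : ℝ, 0 < C1 ∧ 0 < C2 ∧ 0 < C3 ∧
      ∀ l1 l2 : ℝ, 0 < l1 → 0 < l2 →
        (μ / k) * Real.exp ((k / 2) * (Real.log (l1 / l2)) ^ 2) +
            (κ / (2 * khat)) * Real.exp (khat * (Real.log (l1 * l2)) ^ 2) ≥
          C1 * ((Real.sqrt (l1 / l2) - 1) ^ 2 + (Real.sqrt (l2 / l1) - 1) ^ 2) ^ (α1 * k / 2) +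
            C2 * |l1 * l2 - 1| ^ (α2 * khat) - C3 := by
  obtain ⟨C1, hC1, distortional_le⟩ := exists_pos_mul_rpow_le_mul_exp_mul_sq
    (A := μ / k) (a := k / 2) (p := α1 * k / 2) (by positivity) (by positivity) (by positivity)
  obtain ⟨C2, hC2, volumetric_le⟩ := exists_pos_mul_rpow_le_mul_exp_mul_sq
    (A := κ / (2 * khat)) (a := khat) (p := α2 * khat) (by positivity) hkhat (by positivity)
  refine ⟨C1, C2, 1, hC1, hC2, one_pos, fun l1 l2 hl1 hl2 ↦ ?_⟩
  have distortion_le_exp := sq_sqrt_sub_one_add_sq_sqrt_inv_sub_one_le_exp_abs_log (div_pos hl1 hl2)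
  rw [inv_div] at distortion_le_exp
  have dilation_le_exp := abs_sub_one_le_exp_abs_log (mul_pos hl1 hl2).le
  linarith [distortional_le _ _ (by positivity) distortion_le_exp,
    volumetric_le _ _ (abs_nonneg _) dilation_le_exp]
end
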